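/- arXiv:2105.14995 — 3 statements merged into one kernel-verified Lean document; each statement's English description precedes it below -/
import Mathlib

section
/- Let K and H be real Hilbert spaces, let K_h ⊆ K and Q_h ⊆ H be nonzero finite-dimensional subspaces, let 𝔞 : H × K → ℝ and 𝔟 : K × H → ℝ be continuous bilinear forms, and suppose there exists c > 0 such that for every fixed q ∈ Q_h, sup_{k ∈ K_h, k ≠ 0} |𝔟(k, q)| / ‖k‖_K ≥ c ‖q‖_H. Then for every v ∈ H there exists z ∈ Q_h attaining the minimum of the dual-norm functional, i.e., sup_{k ∈ K_h, k ≠ 0} |𝔞(v, k) − 𝔟(k, z)| / ‖k‖_K = inf_{q ∈ Q_h} sup_{k ∈ K_h, k ≠ 0} |𝔞(v, k) − 𝔟(k, q)| / ‖k‖_K; in particular ‖𝔞(v, ·) − 𝔟(·, z)‖_{K_h'} ≤ min_{q ∈ Q_h} max_{k ∈ K_h} |𝔞(v, k) − 𝔟(k, q)| / ‖k‖_K. -/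
/-!
The residual functional `F q = ‖𝔞(v,·) - 𝔟(·,q)‖_{K_h'}` is Lipschitz in `q` because `𝔟` is
bounded, and coercive on `Qh` because the inf-sup condition gives `c ‖q‖ ≤ F q + ca ‖v‖`.
Since `Qh` is finite-dimensional, hence proper, such a function attains its minimum.
-/

/-- Layer-wise dynamic basis update theorem (Theorem 4.2/4.4): the output `z`
of the Galerkin-type basis update rule attains the minimum of the dual-norm
functional `q ↦ ‖𝔞(v,·) - 𝔟(·,q)‖_{K_h'}` over the value space `Qh`. -/
theorem dynamic_basis_update
    {K H : Type*} [NormedAddCommGroup K] [InnerProductSpace ℝ K] [CompleteSpace K]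
    [NormedAddCommGroup H] [InnerProductSpace ℝ H] [CompleteSpace H]
    (Kh : Submodule ℝ K) (Qh : Submodule ℝ H)
    [FiniteDimensional ℝ Kh] [FiniteDimensional ℝ Qh]
    (hK : Kh ≠ ⊥) (hQ : Qh ≠ ⊥)
    (a : H →ₗ[ℝ] K →ₗ[ℝ] ℝ) (b : K →ₗ[ℝ] H →ₗ[ℝ] ℝ)
    (ca : ℝ) (hca : 0 < ca) (ha : ∀ (w : H) (k : K), |a w k| ≤ ca * ‖w‖ * ‖k‖)
    (cb : ℝ) (hcb : 0 < cb) (hb : ∀ (k : K) (q : H), |b k q| ≤ cb * ‖k‖ * ‖q‖)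
    (c : ℝ) (hc : 0 < c)
    (hLBB : ∀ q ∈ Qh, c * ‖q‖ ≤ ⨆ k : {k : K // k ∈ Kh ∧ k ≠ 0}, |b (k : K) q| / ‖(k : K)‖)
    (v : H) :
    ∃ z ∈ Qh,
      (⨆ k : {k : K // k ∈ Kh ∧ k ≠ 0}, |a v (k : K) - b (k : K) z| / ‖(k : K)‖)
        = ⨅ q : Qh, ⨆ k : {k : K // k ∈ Kh ∧ k ≠ 0},
            |a v (k : K) - b (k : K) (q : H)| / ‖(k : K)‖ := by
  obtain ⟨k₀, hk₀, hk₀'⟩ := Submodule.exists_mem_ne_zero_of_ne_bot hK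
  haveI : Nonempty {k : K // k ∈ Kh ∧ k ≠ 0} := ⟨⟨k₀, hk₀, hk₀'⟩⟩
  have hpos : ∀ k : {k : K // k ∈ Kh ∧ k ≠ 0}, 0 < ‖(k : K)‖ :=
    fun k => norm_pos_iff.mpr k.2.2
  set F : Qh → ℝ := fun q => ⨆ k : {k : K // k ∈ Kh ∧ k ≠ 0},
    |a v (k : K) - b (k : K) (q : H)| / ‖(k : K)‖ with hF
  have hbdd : ∀ q : Qh, BddAbove (Set.range fun k : {k : K // k ∈ Kh ∧ k ≠ 0} =>
      |a v (k : K) - b (k : K) (q : H)| / ‖(k : K)‖) := by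
    intro q
    refine ⟨ca * ‖v‖ + cb * ‖(q : H)‖, ?_⟩
    rintro _ ⟨k, rfl⟩
    refine (div_le_iff₀ (hpos k)).mpr ?_
    have h1 := ha v k
    have h2 := hb k q
    have h3 := abs_sub (a v (k : K)) (b (k : K) (q : H))
    linarith
  have hle : ∀ (q : Qh) (k : {k : K // k ∈ Kh ∧ k ≠ 0}),
      |a v (k : K) - b (k : K) (q : H)| ≤ F q * ‖(k : K)‖ := fun q k =>
    (div_le_iff₀ (hpos k)).mp (le_ciSup (hbdd q) k)
  have hlip : LipschitzWith ⟨cb, hcb.le⟩ F := by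
    refine LipschitzWith.of_le_add_mul _ fun x y => ciSup_le fun k => ?_
    refine (div_le_iff₀ (hpos k)).mpr ?_
    have h1 := hle y k
    have h2 := hb k ((y : H) - (x : H))
    have h3 := abs_add_le (a v (k : K) - b (k : K) (y : H)) (b (k : K) ((y : H) - (x : H)))
    have h4 : a v (k : K) - b (k : K) (y : H) + b (k : K) ((y : H) - (x : H))
        = a v (k : K) - b (k : K) (x : H) := by
      rw [map_sub]; ring
    have h5 : dist x y = ‖(y : H) - (x : H)‖ := by
      rw [dist_comm, Subtype.dist_eq, dist_eq_norm]
    rw [h4] at h3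
    rw [h5]
    change _ ≤ (F y + cb * ‖(y : H) - (x : H)‖) * ‖(k : K)‖
    linarith
  have hcoer : ∀ q : Qh, c * ‖q‖ - ca * ‖v‖ ≤ F q := by
    intro q
    have hsup : (⨆ k : {k : K // k ∈ Kh ∧ k ≠ 0}, |b (k : K) (q : H)| / ‖(k : K)‖)
        ≤ F q + ca * ‖v‖ := by
      refine ciSup_le fun k => (div_le_iff₀ (hpos k)).mpr ?_
      have h1 := hle q k
      have h2 := ha v k
      have h3 := abs_sub (a v (k : K)) (a v (k : K) - b (k : K) (q : H))
      rw [sub_sub_cancel] at h3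
      linarith
    have h := hLBB q q.2
    rw [Submodule.coe_norm] at *
    linarith
  have htend : Filter.Tendsto F (Filter.cocompact Qh) Filter.atTop := by
    haveI : ProperSpace Qh := FiniteDimensional.proper ℝ Qh
    refine Filter.tendsto_atTop_mono hcoer ?_
    exact Filter.tendsto_atTop_add_const_right _ (-(ca * ‖v‖))
      ((tendsto_norm_cocompact_atTop (E := Qh)).const_mul_atTop hc)
  obtain ⟨z, hz⟩ := hlip.continuous.exists_forall_le htend
  refine ⟨z, z.2, le_antisymm (le_ciInf hz) (ciInf_le ⟨F z, ?_⟩ z)⟩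
  rintro _ ⟨q, rfl⟩
  exact hz q
end

section
/- Let V_h be a finite-dimensional real inner product space with inner product ⟨·,·⟩, let Q_h be a finite-dimensional real vector space, and let 𝔟 : V_h × Q_h → ℝ be a bilinear form. Fix u ∈ V_h and define J : Q_h → ℝ by J(q) := sup_{v ∈ V_h, v ≠ 0} |⟨u, v⟩ − 𝔟(v, q)| / ‖v‖. Then p ∈ Q_h is a minimizer of J over Q_h if and only if there exists w ∈ V_h such that ⟨w, v⟩ + 𝔟(v, p) = ⟨u, v⟩ for all v ∈ V_h and 𝔟(w, q) = 0 for all q ∈ Q_h. -/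
/-!
By the Riesz representation theorem there is a linear map `B : Q → V` with
`⟪B q, v⟫ = b v q`, so the functional `v ↦ ⟪u, v⟫ - b v q` is represented by `u - B q` and
its dual norm is `‖u - B q‖` (`iSup_abs_inner_div_norm`). Minimizing over `q` is thus the
projection of `u` onto the range of `B`: `p` is optimal iff the residual `w = u - B p` is
orthogonal to that range, i.e. `b w q = 0` for all `q`
(`forall_norm_le_norm_sub_iff`).
-/

open scoped RealInnerProductSpace

/-- The dual norm of `⟪w, ·⟫` is `‖w‖`. When `V` is trivial the supremum is over an empty
type, and its junk value `0` agrees with `‖w‖ = 0`. -/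
lemma iSup_abs_inner_div_norm {V : Type*} [NormedAddCommGroup V] [InnerProductSpace ℝ V]
    (w : V) : (⨆ v : {v : V // v ≠ 0}, |⟪w, (v : V)⟫| / ‖(v : V)‖) = ‖w‖ := by
  have hle : ∀ v : {v : V // v ≠ 0}, |⟪w, (v : V)⟫| / ‖(v : V)‖ ≤ ‖w‖ := fun v =>
    (div_le_iff₀ (norm_pos_iff.mpr v.2)).mpr (abs_real_inner_le_norm w v)
  apply le_antisymm (Real.iSup_le hle (norm_nonneg w))
  by_cases hw : w = 0
  · simp [hw]
  · refine le_ciSup_of_le ⟨‖w‖, ?_⟩ ⟨w, hw⟩ ?_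
    · rintro _ ⟨v, rfl⟩
      exact hle v
    · have h : 0 < ‖w‖ := norm_pos_iff.mpr hw
      rw [real_inner_self_eq_norm_sq, abs_of_nonneg (by positivity), le_div_iff₀ h, sq]

/-- Variational characterization of the orthogonal projection: no correction from the range
of `B` shortens `w` iff `w` is orthogonal to that range. -/
lemma forall_norm_le_norm_sub_iff {V Q : Type*} [NormedAddCommGroup V]
    [InnerProductSpace ℝ V] [AddCommGroup Q] [Module ℝ Q] (B : Q →ₗ[ℝ] V) (w : V) :
    (∀ q, ‖w‖ ≤ ‖w - B q‖) ↔ ∀ q, ⟪w, B q⟫ = 0 := by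
  constructor
  · intro h q
    set r := ⟪w, B q⟫ with hr
    have hN : 0 < ‖B q‖ ^ 2 + 1 := by positivity
    -- Near-optimal step length along `B q`; the `+ 1` covers `B q = 0`.
    obtain ⟨t, ht⟩ : ∃ t : ℝ, t * (‖B q‖ ^ 2 + 1) = r := ⟨_, div_mul_cancel₀ r hN.ne'⟩
    have h1 : ‖w‖ ^ 2 ≤ ‖w - B (t • q)‖ ^ 2 := by
      gcongr
      exact h _
    rw [map_smul, norm_sub_sq_real, real_inner_smul_right, ← hr, norm_smul, mul_pow,
      Real.norm_eq_abs, sq_abs, ← ht] at h1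
    have ht0 : t = 0 := by
      have : t ^ 2 ≤ 0 := by nlinarith [mul_nonneg (sq_nonneg t) (sq_nonneg ‖B q‖)]
      exact pow_eq_zero_iff two_ne_zero |>.mp (le_antisymm this (sq_nonneg t))
    rw [← ht, ht0, zero_mul]
  · intro h q
    refine le_of_sq_le_sq ?_ (norm_nonneg _)
    rw [norm_sub_sq_real, h q]
    nlinarith [sq_nonneg ‖B q‖]

/-- Lemma D.3 (coordinate-free form): `p` minimizes the dual-norm functional
`J(q) = sup_{v ≠ 0} |⟨u,v⟩ − 𝔟(v,q)| / ‖v‖` over `Q_h` if and only if there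
is `w ∈ V_h` solving the mixed variational (saddle-point) system
`⟨w,v⟩ + 𝔟(v,p) = ⟨u,v⟩` for all `v`, and `𝔟(w,q) = 0` for all `q`. -/
theorem min_max_saddle_point_equivalence
    {V : Type*} [NormedAddCommGroup V] [InnerProductSpace ℝ V] [FiniteDimensional ℝ V]
    {Q : Type*} [AddCommGroup Q] [Module ℝ Q] [FiniteDimensional ℝ Q]
    (b : V →ₗ[ℝ] Q →ₗ[ℝ] ℝ) (u : V) (p : Q) :
    (∀ q : Q,
        (⨆ v : {v : V // v ≠ 0}, |⟪u, (v : V)⟫ - b (v : V) p| / ‖(v : V)‖)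
          ≤ ⨆ v : {v : V // v ≠ 0}, |⟪u, (v : V)⟫ - b (v : V) q| / ‖(v : V)‖)
    ↔ ∃ w : V, (∀ v : V, ⟪w, v⟫ + b v p = ⟪u, v⟫) ∧ ∀ q : Q, b w q = 0 := by
  have : CompleteSpace V := FiniteDimensional.complete ℝ V
  let B : Q →ₗ[ℝ] V :=
    (InnerProductSpace.toDual ℝ V).symm.toLinearEquiv.toLinearMap ∘ₗ
      LinearMap.toContinuousLinearMap.toLinearMap ∘ₗ b.flip
  have hB : ∀ q v, ⟪B q, v⟫ = b v q := fun q v => by simp [B]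
  have hJ : ∀ q, (⨆ v : {v : V // v ≠ 0}, |⟪u, (v : V)⟫ - b (v : V) q| / ‖(v : V)‖)
      = ‖u - B q‖ := fun q => by
    simp only [← iSup_abs_inner_div_norm (u - B q), inner_sub_left, hB]
  -- Recentre the competitors at `p`: `u - B q = (u - B p) - B (q - p)`.
  have hshift : (∀ q, ‖u - B p‖ ≤ ‖u - B q‖) ↔ ∀ q, ‖u - B p‖ ≤ ‖(u - B p) - B q‖ := by
    constructor
    · intro h q
      simpa [sub_sub] using h (p + q)
    · intro h q
      simpa using h (q - p)
  simp only [hJ]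
  rw [hshift, forall_norm_le_norm_sub_iff]
  constructor
  · intro h
    refine ⟨u - B p, fun v => ?_, fun q => ?_⟩
    · rw [inner_sub_left, hB, sub_add_cancel]
    · rw [← hB, real_inner_comm, h q]
  · rintro ⟨w, hw, hwq⟩ q
    have hwu : w = u - B p := ext_inner_right ℝ fun v => by
      rw [inner_sub_left, hB, ← hw v, add_sub_cancel_right]
    rw [← hwu, real_inner_comm, hB, hwq]
end

section
/- Let 𝒱 and H be real normed vector spaces, let v₁, …, v_d ∈ 𝒱 be linearly independent with span V_h and q₁, …, q_r ∈ H linearly independent with span Q_h, r ≤ d, and let 𝔟 : 𝒱 × H → ℝ be a bilinear form. Let B be the real r × d matrix with entries B_{ij} = 𝔟(v_j, q_i), and assume B has full row rank r, so that the symmetric matrix B Bᵀ is positive definite; let σ_min := √(λ_min(B Bᵀ)) > 0 be its smallest singular value. Assume the norm equivalences ‖Σ_{j=1}^{d} μ_j v_j‖_𝒱 ≤ c_V ‖μ‖₂ for all μ ∈ ℝᵈ and ‖Σ_{j=1}^{r} λ_j q_j‖_H ≤ c_Q ‖λ‖₂ for all λ ∈ ℝʳ, with constants c_V, c_Q > 0.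 Then for every p ∈ Q_h, sup_{w ∈ V_h, w ≠ 0} |𝔟(w, p)| / ‖w‖_𝒱 ≥ c_V⁻¹ c_Q⁻¹ σ_min ‖p‖_H. -/
open Matrix

/-!
Write `p = ∑ᵢ λᵢ qᵢ` and test the supremum with `w = ∑ⱼ μⱼ vⱼ`, where `μ = Bᵀ λ`.
Then `𝔟(w, p) = λᵀ B μ = ‖Bᵀ λ‖₂²` and `‖w‖ ≤ c_V ‖Bᵀ λ‖₂`, so the quotient is at least
`c_V⁻¹ ‖Bᵀ λ‖₂`. The Rayleigh bound for `B Bᵀ` (`iInf_eigenvalues_mul_le`) gives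
`‖Bᵀ λ‖₂ ≥ σ_min ‖λ‖₂ ≥ σ_min c_Q⁻¹ ‖p‖`. The supremum is a genuine one, because a linear
functional on the finite-dimensional space `V_h` is bounded (`bddAbove_quotient`).
-/

/-- Rayleigh bound: the quadratic form of a real symmetric matrix is bounded below by its smallest
eigenvalue, as seen by expanding `x` in an orthonormal eigenbasis. -/
lemma iInf_eigenvalues_mul_le {n : Type*} [Fintype n] [DecidableEq n]
    {A : Matrix n n ℝ} (hA : A.IsHermitian) (x : n → ℝ) :
    (⨅ i, hA.eigenvalues i) * (x ⬝ᵥ x) ≤ x ⬝ᵥ (A *ᵥ x) := by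
  set e := hA.eigenvectorBasis
  have hin : ∀ y z : n → ℝ, inner ℝ (WithLp.toLp 2 y) (WithLp.toLp 2 z) = y ⬝ᵥ z := by
    intro y z
    simp [EuclideanSpace.inner_toLp_toLp, dotProduct_comm]
  have hAe : ∀ i, inner ℝ (e i) (WithLp.toLp 2 (A *ᵥ x))
      = hA.eigenvalues i * inner ℝ (e i) (WithLp.toLp 2 x) := by
    intro i
    have h1 := hin (e i).ofLp (A *ᵥ x)
    have h2 := hin (e i).ofLp x
    have hT : Aᵀ = A := by simpa using hA.eq
    simp only [WithLp.toLp_ofLp] at h1 h2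
    rw [h1, h2, dotProduct_mulVec, ← mulVec_transpose, hT, hA.mulVec_eigenvectorBasis,
      smul_dotProduct, smul_eq_mul]
  rw [← hin x x, ← hin x (A *ᵥ x), ← e.sum_inner_mul_inner, ← e.sum_inner_mul_inner,
    Finset.mul_sum]
  refine Finset.sum_le_sum fun i _ => ?_
  rw [hAe, real_inner_comm (e i)]
  have hm : (⨅ i, hA.eigenvalues i) ≤ hA.eigenvalues i :=
    ciInf_le (Set.finite_range _).bddBelow i
  nlinarith [mul_self_nonneg (inner ℝ (e i) (WithLp.toLp 2 x))]

lemma posDef_mul_transpose_of_rank {r d : ℕ} {B : Matrix (Fin r) (Fin d) ℝ}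
    (hrank : B.rank = r) : (B * Bᵀ).PosDef := by
  have hli : LinearIndependent ℝ B.row := by
    rw [linearIndependent_iff_card_eq_finrank_span, Set.finrank, ← rank_eq_finrank_span_row,
      hrank, Fintype.card_fin]
  simpa using PosDef.mul_conjTranspose_self B (vecMul_injective_iff.2 hli)

lemma bddAbove_quotient {E : Type*} [NormedAddCommGroup E] [NormedSpace ℝ E]
    (S : Submodule ℝ E) [FiniteDimensional ℝ S] (f : E →ₗ[ℝ] ℝ) :
    BddAbove (Set.range fun w : {w : E // w ∈ S ∧ w ≠ 0} => |f (w : E)| / ‖(w : E)‖) := by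
  refine ⟨‖(f.comp S.subtype).toContinuousLinearMap‖, ?_⟩
  rintro _ ⟨⟨w, hw, hw0⟩, rfl⟩
  exact (div_le_iff₀ (norm_pos_iff.2 hw0)).2
    ((f.comp S.subtype).toContinuousLinearMap.le_opNorm ⟨w, hw⟩)

/-- Lemma D.4: verification of the discrete inf-sup (LBB) lower bound via the
SVD of the matrix `B` of the bilinear form: for every `p` in the span of the
value basis `q₁,…,q_r`,
`sup_{w ∈ V_h, w ≠ 0} |𝔟(w,p)|/‖w‖ ≥ c_V⁻¹ c_Q⁻¹ σ_min ‖p‖`, where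
`σ_min = √(λ_min(B Bᵀ)) > 0` is the smallest singular value of `B`. -/
theorem infsup_lower_bound
    {𝒱 H : Type*} [NormedAddCommGroup 𝒱] [NormedSpace ℝ 𝒱]
    [NormedAddCommGroup H] [NormedSpace ℝ H]
    (r d : ℕ) (hr : 0 < r) (hrd : r ≤ d)
    (v : Fin d → 𝒱) (hv : LinearIndependent ℝ v)
    (q : Fin r → H) (hq : LinearIndependent ℝ q)
    (b : 𝒱 →ₗ[ℝ] H →ₗ[ℝ] ℝ)
    (B : Matrix (Fin r) (Fin d) ℝ) (hBdef : ∀ i j, B i j = b (v j) (q i))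
    (hrank : B.rank = r)
    (hherm : (B * Bᵀ).IsHermitian)
    (cV cQ : ℝ) (hcV : 0 < cV) (hcQ : 0 < cQ)
    (hnV : ∀ μ : Fin d → ℝ, ‖∑ j, μ j • v j‖ ≤ cV * Real.sqrt (∑ j, μ j ^ 2))
    (hnQ : ∀ lam : Fin r → ℝ, ‖∑ i, lam i • q i‖ ≤ cQ * Real.sqrt (∑ i, lam i ^ 2)) :
    (B * Bᵀ).PosDef ∧ 0 < Real.sqrt (⨅ i, hherm.eigenvalues i) ∧
    ∀ p ∈ Submodule.span ℝ (Set.range q),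
      cV⁻¹ * cQ⁻¹ * Real.sqrt (⨅ i, hherm.eigenvalues i) * ‖p‖ ≤
        ⨆ w : {w : 𝒱 // w ∈ Submodule.span ℝ (Set.range v) ∧ w ≠ 0},
          |b (w : 𝒱) p| / ‖(w : 𝒱)‖ := by
  have hpd := posDef_mul_transpose_of_rank hrank
  haveI : Nonempty (Fin r) := ⟨⟨0, hr⟩⟩
  have hm : 0 < ⨅ i, hherm.eigenvalues i := by
    obtain ⟨i, hi⟩ := exists_eq_ciInf_of_finite (f := hherm.eigenvalues)
    rw [← hi]
    exact hpd.eigenvalues_pos i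
  refine ⟨hpd, Real.sqrt_pos.2 hm, fun p hp => ?_⟩
  obtain ⟨lam, rfl⟩ := (Submodule.mem_span_range_iff_exists_fun ℝ).1 hp
  set m := ⨅ i, hherm.eigenvalues i
  set p := ∑ i, lam i • q i with hpdef
  by_cases hlam : lam = 0
  · have hp0 : p = 0 := by simp [hpdef, hlam]
    rw [hp0]
    simp
  set μ := Bᵀ *ᵥ lam with hμ
  set w := ∑ j, μ j • v j with hw
  have hquad : lam ⬝ᵥ ((B * Bᵀ) *ᵥ lam) = ∑ j, μ j ^ 2 := by
    rw [← mulVec_mulVec, dotProduct_mulVec, ← mulVec_transpose, dotProduct]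
    simp only [hμ, sq]
  have hray : m * ∑ i, lam i ^ 2 ≤ ∑ j, μ j ^ 2 := by
    have h := iInf_eigenvalues_mul_le hherm lam
    rw [hquad] at h
    simpa only [dotProduct, sq] using h
  have hlampos : 0 < ∑ i, lam i ^ 2 := by
    obtain ⟨i, hi⟩ := Function.ne_iff.1 hlam
    exact Finset.sum_pos' (fun i _ => sq_nonneg _) ⟨i, Finset.mem_univ i, sq_pos_of_ne_zero hi⟩
  have hμpos : 0 < ∑ j, μ j ^ 2 := lt_of_lt_of_le (mul_pos hm hlampos) hray
  have hbw : b w p = ∑ j, μ j ^ 2 := by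
    have hj : ∀ j, b (v j) p = μ j := by
      intro j
      simp [hpdef, hμ, mulVec, dotProduct, hBdef, mul_comm]
    simp [hw, LinearMap.sum_apply, hj, sq]
  have hw0 : w ≠ 0 := by
    intro h
    rw [h] at hbw
    simp at hbw
    linarith
  have hwmem : w ∈ Submodule.span ℝ (Set.range v) :=
    (Submodule.mem_span_range_iff_exists_fun ℝ).2 ⟨μ, rfl⟩
  haveI : FiniteDimensional ℝ (Submodule.span ℝ (Set.range v)) :=
    FiniteDimensional.span_of_finite ℝ (Set.finite_range v)
  refine le_trans ?_ (le_ciSup (bddAbove_quotient _ (b.flip p)) ⟨w, hwmem, hw0⟩)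
  change _ ≤ |b w p| / ‖w‖
  rw [hbw, abs_of_pos hμpos, le_div_iff₀ (norm_pos_iff.2 hw0)]
  set s := Real.sqrt (∑ j, μ j ^ 2)
  have hs : 0 < s := Real.sqrt_pos.2 hμpos
  have hss : ∑ j, μ j ^ 2 = s * s := (Real.mul_self_sqrt hμpos.le).symm
  have hsl : Real.sqrt m * Real.sqrt (∑ i, lam i ^ 2) ≤ s := by
    rw [← Real.sqrt_mul hm.le]
    exact Real.sqrt_le_sqrt hray
  have hpS : cQ⁻¹ * ‖p‖ ≤ Real.sqrt (∑ i, lam i ^ 2) := (inv_mul_le_iff₀ hcQ).2 (hnQ lam)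
  have hwS : cV⁻¹ * ‖w‖ ≤ s := (inv_mul_le_iff₀ hcV).2 (hnV μ)
  calc cV⁻¹ * cQ⁻¹ * Real.sqrt m * ‖p‖ * ‖w‖
      = (Real.sqrt m * (cQ⁻¹ * ‖p‖)) * (cV⁻¹ * ‖w‖) := by ring
    _ ≤ s * s := by
        refine mul_le_mul ?_ hwS (by positivity) hs.le
        exact (mul_le_mul_of_nonneg_left hpS (Real.sqrt_nonneg m)).trans hsl
    _ = _ := hss.symm
end
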